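/- arXiv:math/0508259 — 3 statements merged into one kernel-verified Lean document; each statement's English description precedes it below -/
import Mathlib

section
/- Let n be a positive integer, let V be a free module of rank 2 over ℤ/nℤ (so Aut(V) ≅ GL₂(ℤ/nℤ)), let Γ be a subgroup of Aut(V), and let W ⊆ V be a ℤ/nℤ-submodule that is Γ-invariant, i.e., γW = W for every γ ∈ Γ. Suppose the action of Γ on W is abelian, meaning γ(δw) = δ(γw) for all γ, δ ∈ Γ and all w ∈ W. Then |W| ≤ I(Γ)³, where I(Γ) = (Aut(V) : Γ) denotes the index of Γ in Aut(V). -/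
/-!
Write `R = ℤ/nℤ`. By Smith normal form, applied to the preimage of `W` in `ℤ²`, there is a basis of
`V` in which `W = d₁R ⊕ d₂R` with `d₁, d₂ ∣ n` (`exists_adapted_basis`). Put `g = gcd(d₁, d₂)`,
`d₁ = gp`, `d₂ = gq` and `n = gpqm`. Then `|W| = (mq)(mp) = m² · pq`, so it is enough to show that
the index of `Γ` is at least `m` and at least `pq`.

Both bounds come from the elements `s(x, y) = (1 0; y 1)(1 x; 0 1)`.

* For `0 ≤ x < p` and `0 ≤ y < q` they lie in distinct cosets of the stabiliser of `W`
  (`mul_le_index`), so the index is at least `pq`.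
* Let `x, y` run through `ℤ/mℤ`. If `s(x, y)` and `s(x', y')` both lie in the coset of `s(x₀, y₀)`,
  then, up to conjugation by `(1 x₀; 0 1)`, the elements `s(X, Y)` and `s(X', Y')` with
  `X = x - x₀`, and so on, lie in `Γ`. Since `W` contains `gpq • V`, they commute modulo `m`.
  Comparing upper left entries gives `XY' = X'Y` in `ℤ/mℤ`, that is, the points `(X, Y)` span an
  isotropic subgroup of the symplectic module `(ℤ/mℤ)²`. Such a subgroup has at most `m` elements
  (`card_le_of_isotropic`), so the `m²` elements `s(x, y)` meet at least `m` cosets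
  (`le_index`).
-/

/-! ### Isotropic subsets of `(ℤ/mℤ)²` -/

/-- A subset of `(ℤ/mℤ)²` on which the determinant pairing vanishes has at most `m` elements: the
subgroup `K` it generates is still isotropic; if `z` generates the first projection of `K`, then
the kernel of that projection is contained in the annihilator of `z`. -/
lemma card_le_of_isotropic (m : ℕ) [NeZero m] (T : Finset (ZMod m × ZMod m))
    (hT : ∀ a ∈ T, ∀ b ∈ T, a.1 * b.2 = b.1 * a.2) : T.card ≤ m := by
  classical
  set K : AddSubgroup (ZMod m × ZMod m) := AddSubgroup.closure (T : Set (ZMod m × ZMod m)) with hK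
  have hiso : ∀ a ∈ K, ∀ b ∈ K, a.1 * b.2 = b.1 * a.2 := by
    intro a ha b hb
    induction ha, hb using AddSubgroup.closure_induction₂ with
    | mem x y hx hy => exact hT x hx y hy
    | zero_left x hx => simp
    | zero_right x hx => simp
    | add_left x y z hx hy hz h1 h2 =>
      simp only [Prod.fst_add, Prod.snd_add]; linear_combination h1 + h2
    | add_right x y z hx hy hz h1 h2 =>
      simp only [Prod.fst_add, Prod.snd_add]; linear_combination h1 + h2
    | neg_left x y hx hy h => simp only [Prod.fst_neg, Prod.snd_neg]; linear_combination -h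
    | neg_right x y hx hy h => simp only [Prod.fst_neg, Prod.snd_neg]; linear_combination -h
  have hTK : T.card ≤ Nat.card K := by
    rw [← Nat.card_eq_finsetCard T]
    exact Nat.card_mono (Set.toFinite _) AddSubgroup.subset_closure
  refine hTK.trans ?_
  let φ : K →+ ZMod m := (AddMonoidHom.fst _ _).comp K.subtype
  obtain ⟨⟨z, hz⟩, hgen⟩ := IsAddCyclic.exists_generator (α := φ.range)
  obtain ⟨k, hk⟩ := id hz
  let ψ : ZMod m →+ ZMod m := AddMonoidHom.mulLeft z
  have hrange : Nat.card φ.range ≤ Nat.card ψ.range := by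
    refine Nat.card_mono (Set.toFinite _) ?_
    intro x hx
    obtain ⟨j, hj⟩ := AddSubgroup.mem_zmultiples_iff.1 (hgen ⟨x, hx⟩)
    refine ⟨(j : ZMod m), ?_⟩
    have : j • z = x := congrArg Subtype.val hj
    rw [← this]
    simp [ψ, mul_comm]
  have hker : Nat.card φ.ker ≤ Nat.card ψ.ker := by
    have hmem : ∀ a : φ.ker, (a : K).1.2 ∈ ψ.ker := by
      rintro ⟨⟨⟨a, b⟩, hab⟩, h0⟩
      have h0' : a = 0 := h0
      have := hiso _ k.2 _ hab
      rw [AddMonoidHom.mem_ker]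
      change z * b = 0
      rw [← hk]
      change (k : ZMod m × ZMod m).1 * b = 0
      simpa [h0'] using this
    refine Nat.card_le_card_of_injective (fun a : φ.ker => (⟨(a : K).1.2, hmem a⟩ : ψ.ker)) ?_
    rintro ⟨⟨⟨a, b⟩, hab⟩, h0⟩ ⟨⟨⟨a', b'⟩, hab'⟩, h0'⟩ h
    have h1 : a = 0 := h0
    have h2 : a' = 0 := h0'
    have h3 : b = b' := congrArg Subtype.val h
    subst h1 h2 h3
    rfl
  calc Nat.card K = Nat.card φ.ker * Nat.card φ.range := by
        rw [← AddSubgroup.index_ker, AddSubgroup.card_mul_index]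
    _ ≤ Nat.card ψ.ker * Nat.card ψ.range := Nat.mul_le_mul hker hrange
    _ = Nat.card (ZMod m) := by rw [← AddSubgroup.index_ker, AddSubgroup.card_mul_index]
    _ = m := by simp

/-! ### Products of transvections and coset counting -/

/-- The automorphism `s(x, y) = (1 0; y 1)(1 x; 0 1)` of `R²`. -/
def shear {R : Type*} [CommRing R] (x y : R) : (R × R) ≃ₗ[R] (R × R) where
  toFun v := (v.1 + x * v.2, v.2 + y * (v.1 + x * v.2))
  invFun v := (v.1 - x * (v.2 - y * v.1), v.2 - y * v.1)
  map_add' u v := by ext <;> simp <;> ring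
  map_smul' c v := by ext <;> simp <;> ring
  left_inv v := by ext <;> simp
  right_inv v := by ext <;> simp

lemma shear_apply {R : Type*} [CommRing R] (x y a b : R) :
    shear x y (a, b) = (a + x * b, b + y * (a + x * b)) := rfl

lemma shear_inv_mul_apply {R : Type*} [CommRing R] (x₀ y₀ x y a b : R) :
    ((shear x₀ y₀)⁻¹ * shear x y) (a, b) =
      (a + x * b - x₀ * (b + y * (a + x * b) - y₀ * (a + x * b)),
        b + y * (a + x * b) - y₀ * (a + x * b)) := rfl

/-- Pigeonhole for cosets: if every left coset of `H` contains `f p` for at most `k` indices `p`,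
then there are at most `k * H.index` indices. -/
lemma card_le_mul_index {G ι : Type*} [Group G] [Finite G] (H : Subgroup G) (P : Finset ι)
    (f : ι → G) (k : ℕ)
    (h : ∀ p₀ ∈ P, ∀ T ⊆ P, (∀ p ∈ T, (f p₀)⁻¹ * f p ∈ H) → T.card ≤ k) :
    P.card ≤ k * H.index := by
  classical
  have := Fintype.ofFinite (G ⧸ H)
  have h1 := Finset.card_le_mul_card_image (f := fun p => (f p : G ⧸ H)) P k (by
    intro c hc
    obtain ⟨p₀, hp₀, rfl⟩ := Finset.mem_image.1 hc
    refine h p₀ hp₀ _ (Finset.filter_subset _ _) ?_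
    intro p hp
    exact QuotientGroup.eq.1 (Finset.mem_filter.1 hp).2.symm)
  refine h1.trans (Nat.mul_le_mul_left _ ?_)
  rw [Subgroup.index, Nat.card_eq_fintype_card]
  exact Finset.card_le_univ _

/-! ### Diagonal submodules of `(ℤ/nℤ)²` -/

section Diagonal

variable {n : ℕ} [NeZero n] {g p q m : ℕ}
  (Γ : Subgroup ((ZMod n × ZMod n) ≃ₗ[ZMod n] (ZMod n × ZMod n)))
  (W : Submodule (ZMod n) (ZMod n × ZMod n))

/-- The number of translates of `W` under `Aut(R²)` is at least `pq`, hence so is the index of any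
subgroup stabilising `W`. -/
lemma mul_le_index (hg : g ≠ 0) (hpq : p.Coprime q)
    (hmem : ∀ a b : ℤ, ((a : ZMod n), (b : ZMod n)) ∈ W ↔ (g * p : ℤ) ∣ a ∧ (g * q : ℤ) ∣ b)
    (hW : ∀ γ ∈ Γ, ∀ w ∈ W, γ w ∈ W) : p * q ≤ Γ.index := by
  have hg' : (g : ℤ) ≠ 0 := by exact_mod_cast hg
  have hcop : IsCoprime (p : ℤ) (q : ℤ) := Nat.isCoprime_iff_coprime.2 hpq
  have : Finite ((ZMod n × ZMod n) ≃ₗ[ZMod n] (ZMod n × ZMod n)) := DFunLike.finite _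
  have := card_le_mul_index Γ (Finset.range p ×ˢ Finset.range q)
    (fun z => shear (z.1 : ZMod n) (z.2 : ZMod n)) 1 (by
      rintro ⟨x₀, y₀⟩ h₀ T hTP hT
      refine (Finset.card_le_card (t := {(x₀, y₀)}) ?_).trans (by simp)
      rintro ⟨x, y⟩ hxy
      have hγ := hT _ hxy
      have hb := hTP hxy
      simp only [Finset.mem_product, Finset.mem_range] at h₀ hb
      have e1 : (q : ℤ) ∣ (y - y₀ : ℤ) := by
        have h := hW _ hγ _ ((hmem (g * p) 0).2 ⟨dvd_rfl, dvd_zero _⟩)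
        rw [shear_inv_mul_apply] at h
        have h2 := ((hmem ((g * p : ℤ) - x₀ * ((y - y₀) * (g * p))) ((y - y₀) * (g * p))).1 (by
          push_cast at h ⊢
          convert h using 2 <;> ring)).2
        have h3 : (g * q : ℤ) ∣ g * ((y - y₀) * p) := by
          convert h2 using 1; ring
        exact hcop.symm.dvd_of_dvd_mul_right ((mul_dvd_mul_iff_left hg').1 h3)
      have hy : y = y₀ := by
        have := Int.eq_zero_of_abs_lt_dvd e1 (by rw [abs_lt]; omega)
        omega
      subst hy
      have e2 : (p : ℤ) ∣ (x - x₀ : ℤ) := by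
        have h := hW _ hγ _ ((hmem 0 (g * q)).2 ⟨dvd_zero _, dvd_rfl⟩)
        rw [shear_inv_mul_apply] at h
        have h2 := ((hmem ((x - x₀) * (g * q)) (g * q)).1 (by
          push_cast at h ⊢
          convert h using 2 <;> ring)).1
        have h3 : (g * p : ℤ) ∣ g * ((x - x₀) * q) := by
          convert h2 using 1; ring
        exact hcop.dvd_of_dvd_mul_right ((mul_dvd_mul_iff_left hg').1 h3)
      have hx : x = x₀ := by
        have := Int.eq_zero_of_abs_lt_dvd e2 (by rw [abs_lt]; omega)
        omega
      subst hx
      simp)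
  simpa using this

/-- A subgroup acting abelianly on `W ⊇ gpq • R²` has index at least `m = n / gpq`. -/
lemma le_index (hn : n = g * p * q * m)
    (hmem : ∀ a b : ℤ, ((a : ZMod n), (b : ZMod n)) ∈ W ↔ (g * p : ℤ) ∣ a ∧ (g * q : ℤ) ∣ b)
    (habel : ∀ γ ∈ Γ, ∀ δ ∈ Γ, ∀ w ∈ W, γ (δ w) = δ (γ w)) : m ≤ Γ.index := by
  classical
  have hn0 : n ≠ 0 := NeZero.ne n
  have hm0 : m ≠ 0 := by rintro rfl; simp at hn; omega
  have hL0 : g * p * q ≠ 0 := by intro h; rw [h] at hn; simp at hn; omega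
  have : NeZero m := ⟨hm0⟩
  have hL0' : (g * p * q : ℤ) ≠ 0 := by exact_mod_cast hL0
  have : Finite ((ZMod n × ZMod n) ≃ₗ[ZMod n] (ZMod n × ZMod n)) := DFunLike.finite _
  have := card_le_mul_index Γ (Finset.univ : Finset (ZMod m × ZMod m))
    (fun z => shear (z.1.val : ZMod n) (z.2.val : ZMod n)) m (by
      rintro ⟨x₀, y₀⟩ - T - hT
      rw [← Finset.card_image_of_injective T (sub_left_injective (b := (x₀, y₀)))]
      apply card_le_of_isotropic
      simp only [Finset.forall_mem_image]
      rintro ⟨x, y⟩ h1 ⟨x', y'⟩ h2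
      have hw := (hmem (g * p * q) 0).2 ⟨dvd_mul_right _ _, dvd_zero _⟩
      have hc := habel _ (hT _ h1) _ (hT _ h2) _ hw
      simp only [shear_inv_mul_apply, Prod.mk.injEq] at hc
      obtain ⟨hc1, hc2⟩ := hc
      have key : (((g * p * q : ℤ) * (((x.val : ℤ) - x₀.val) * ((y'.val : ℤ) - y₀.val)
          - ((x'.val : ℤ) - x₀.val) * ((y.val : ℤ) - y₀.val)) : ℤ) : ZMod n) = 0 := by
        push_cast at hc1 hc2 ⊢
        -- conjugation by `(1 x₀; 0 1)` adds `x₀` times the second coordinate to the first one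
        linear_combination hc1 + (x₀.val : ZMod n) * hc2
      rw [CharP.intCast_eq_zero_iff (ZMod n) n, hn] at key
      push_cast at key
      have h3 := (mul_dvd_mul_iff_left hL0').1 key
      rw [← CharP.intCast_eq_zero_iff (ZMod m) m] at h3
      push_cast at h3
      simp only [ZMod.natCast_val, ZMod.cast_id', id_eq] at h3
      exact sub_eq_zero.1 h3)
  simp only [Finset.card_univ, Fintype.card_prod, ZMod.card] at this
  exact Nat.le_of_mul_le_mul_left this (Nat.pos_of_ne_zero hm0)

lemma card_le_of_diagonal (hn : n = g * p * q * m)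
    (hmem : ∀ a b : ℤ, ((a : ZMod n), (b : ZMod n)) ∈ W ↔ (g * p : ℤ) ∣ a ∧ (g * q : ℤ) ∣ b) :
    Nat.card W ≤ (m * q) * (m * p) := by
  have hmem' : ∀ w ∈ W, g * p ∣ w.1.val ∧ g * q ∣ w.2.val := by
    rintro ⟨a, b⟩ h
    have := (hmem a.val b.val).1 (by simpa using h)
    exact_mod_cast this
  have hlt : ∀ a : ZMod n, a.val < g * p * (m * q) ∧ a.val < g * q * (m * p) := by
    intro a
    have := ZMod.val_lt a
    constructor
    · calc a.val < n := this
        _ = _ := by rw [hn]; ring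
    · calc a.val < n := this
        _ = _ := by rw [hn]; ring
  let f : W → Fin (m * q) × Fin (m * p) := fun w =>
    (⟨(w : ZMod n × ZMod n).1.val / (g * p), Nat.div_lt_of_lt_mul (hlt _).1⟩,
     ⟨(w : ZMod n × ZMod n).2.val / (g * q), Nat.div_lt_of_lt_mul (hlt _).2⟩)
  have hf : Function.Injective f := by
    rintro ⟨⟨a, b⟩, h⟩ ⟨⟨a', b'⟩, h'⟩ hff
    simp only [f, Prod.mk.injEq, Fin.mk.injEq] at hff
    have e1 := (Nat.div_left_inj (hmem' _ h).1 (hmem' _ h').1).1 hff.1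
    have e2 := (Nat.div_left_inj (hmem' _ h).2 (hmem' _ h').2).1 hff.2
    simp only [Subtype.mk.injEq, Prod.mk.injEq]
    exact ⟨ZMod.val_injective n e1, ZMod.val_injective n e2⟩
  have := Nat.card_le_card_of_injective f hf
  simpa using this

end Diagonal

/-! ### Reduction to the diagonal case -/

/-- Smith normal form for submodules of a free `ℤ/nℤ`-module of rank two: some coordinates on `V`
make `W` diagonal, with entries dividing `n`. It is deduced from the Smith normal form of the
preimage of `W` in `ℤ²`. -/
lemma exists_adapted_basis (n : ℕ) [NeZero n] {V : Type*} [AddCommGroup V] [Module (ZMod n) V]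
    (bV : V ≃ₗ[ZMod n] (Fin 2 → ZMod n)) (W : Submodule (ZMod n) V) :
    ∃ (e : (ZMod n × ZMod n) ≃ₗ[ZMod n] V) (d₁ d₂ : ℕ), d₁ ∣ n ∧ d₂ ∣ n ∧
      ∀ a b : ℤ, e ((a : ZMod n), (b : ZMod n)) ∈ W ↔ (d₁ : ℤ) ∣ a ∧ (d₂ : ℤ) ∣ b := by
  have hn0 : (n : ℤ) ≠ 0 := by exact_mod_cast NeZero.ne n
  let π₀ : (Fin 2 → ℤ) →+ V :=
    { toFun := fun v => bV.symm (fun i => (v i : ZMod n))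
      map_zero' := by simp [← Pi.zero_def]
      map_add' := fun u v => by
        rw [← map_add]; congr 1; ext i; simp }
  let π : (Fin 2 → ℤ) →ₗ[ℤ] V := π₀.toIntLinearMap
  have hπsurj : Function.Surjective π := by
    intro v
    refine ⟨fun i => ((bV v i).val : ℤ), ?_⟩
    change bV.symm _ = v
    rw [LinearEquiv.symm_apply_eq]
    ext i; simp
  have hnV : ∀ v : V, (n : ℤ) • v = 0 := by
    intro v
    rw [← Int.cast_smul_eq_zsmul (ZMod n)]; simp
  let N : Submodule ℤ (Fin 2 → ℤ) := (AddSubgroup.toIntSubmodule W.toAddSubgroup).comap π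
  have hN : ∀ u, u ∈ N ↔ π u ∈ W := fun u => Iff.rfl
  have hnN : ∀ u, (n : ℤ) • u ∈ N := by
    intro u
    rw [hN, map_smul, hnV]; exact W.zero_mem
  have hrank : Module.finrank ℤ N = Module.finrank ℤ (Fin 2 → ℤ) := by
    refine le_antisymm (Submodule.finrank_le N) ?_
    -- multiplication by `n` embeds `ℤ²` into `N`
    refine LinearMap.finrank_le_finrank_of_injective
      (f := (LinearMap.lsmul ℤ (Fin 2 → ℤ) (n : ℤ)).codRestrict N hnN) ?_
    intro u v huv
    have : (n : ℤ) • u = (n : ℤ) • v := congrArg Subtype.val huv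
    exact smul_right_injective _ hn0 this
  obtain ⟨b, a, ab, hab⟩ := Submodule.exists_smith_normal_form_of_rank_eq (Pi.basisFun ℤ (Fin 2))
    hrank
  have hNmem : ∀ u, u ∈ N ↔ ∀ i, a i ∣ b.repr u i := by
    intro u
    constructor
    · intro hu i
      have h1 : u = ∑ j, (ab.repr ⟨u, hu⟩ j * a j) • b j := by
        have := congrArg Subtype.val (ab.sum_repr ⟨u, hu⟩)
        simp only [Submodule.coe_sum, Submodule.coe_smul, hab, smul_smul] at this
        exact this.symm
      rw [h1, b.repr_sum_self]
      exact dvd_mul_left _ _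
    · intro h
      rw [← b.sum_repr u]
      refine N.sum_mem fun i _ => ?_
      obtain ⟨c, hc⟩ := h i
      rw [hc, mul_comm, mul_smul, ← hab]
      exact N.smul_mem _ (ab i).2
  let e₀ : (ZMod n × ZMod n) →ₗ[ZMod n] V :=
    (LinearMap.toSpanSingleton (ZMod n) V (π (b 0))).coprod
      (LinearMap.toSpanSingleton (ZMod n) V (π (b 1)))
  have he₀ : ∀ x y : ℤ, e₀ ((x : ZMod n), (y : ZMod n)) = π (x • b 0 + y • b 1) := by
    intro x y
    rw [map_add, map_smul, map_smul]
    simp [e₀, Int.cast_smul_eq_zsmul]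
  have hsurj : Function.Surjective e₀ := by
    intro v
    obtain ⟨u, rfl⟩ := hπsurj v
    refine ⟨((b.repr u 0 : ZMod n), (b.repr u 1 : ZMod n)), ?_⟩
    rw [he₀]
    congr 1
    have := b.sum_repr u
    rwa [Fin.sum_univ_two] at this
  have hbij : Function.Bijective e₀ := by
    refine hsurj.bijective_of_nat_card_le ?_
    rw [Nat.card_congr bV.toEquiv]
    simp [pow_two]
  refine ⟨LinearEquiv.ofBijective e₀ hbij, (a 0).natAbs, (a 1).natAbs, ?_, ?_, ?_⟩
  · have := (hNmem _).1 (hnN (b 0)) 0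
    simp only [map_smul, b.repr_self] at this
    simpa [Int.natAbs_dvd_natAbs, ← Int.natCast_dvd_natCast] using this
  · have := (hNmem _).1 (hnN (b 1)) 1
    simp only [map_smul, b.repr_self] at this
    simpa [Int.natAbs_dvd_natAbs, ← Int.natCast_dvd_natCast] using this
  · intro x y
    rw [LinearEquiv.ofBijective_apply, he₀, ← hN, hNmem, Fin.forall_fin_two]
    simp only [map_add, map_smul, b.repr_self]
    simp

/-- A large subgroup of `Aut(V) ≅ GL₂(ℤ/nℤ)` cannot act in an abelian fashion on a large
`Γ`-invariant submodule `W ⊆ V`: if the action of `Γ` on `W` is abelian, then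
`|W| ≤ (Aut(V) : Γ)³`. -/
theorem stmt0 (n : ℕ) (hn : 0 < n) (V : Type*) [AddCommGroup V] [Module (ZMod n) V]
    (bV : V ≃ₗ[ZMod n] (Fin 2 → ZMod n))
    (Γ : Subgroup (V ≃ₗ[ZMod n] V))
    (W : Submodule (ZMod n) V)
    (hW : ∀ γ ∈ Γ, ∀ w ∈ W, γ w ∈ W)
    (habel : ∀ γ ∈ Γ, ∀ δ ∈ Γ, ∀ w ∈ W, γ (δ w) = δ (γ w)) :
    Nat.card W ≤ Γ.index ^ 3 := by
  have : NeZero n := ⟨hn.ne'⟩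
  obtain ⟨e, d₁, d₂, h₁, h₂, hmem⟩ := exists_adapted_basis n bV W
  have hd₁ : 0 < d₁ := Nat.pos_of_dvd_of_pos h₁ hn
  obtain ⟨g, p, q, hg, hpq, rfl, rfl⟩ := Nat.exists_coprime' (m := d₁) (n := d₂)
    (Nat.gcd_pos_of_pos_left _ hd₁)
  obtain ⟨m, hm⟩ : g * p * q ∣ n := by
    have := Nat.lcm_dvd h₁ h₂
    rwa [Nat.lcm_mul_right, hpq.lcm_eq_mul, mul_comm, ← mul_assoc] at this
  -- transport `Γ` and `W` to `R²` along `e`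
  let c : ((ZMod n × ZMod n) ≃ₗ[ZMod n] (ZMod n × ZMod n)) ≃* (V ≃ₗ[ZMod n] V) :=
    { toFun := fun f => (e.symm.trans f).trans e
      invFun := fun f => (e.trans f).trans e.symm
      left_inv := fun f => by ext <;> simp
      right_inv := fun f => by ext; simp
      map_mul' := fun f f' => by ext; simp }
  have hc : ∀ f v, e (f v) = c f (e v) := fun f v => by simp [c]
  set Γ' := Γ.comap c.toMonoidHom with hΓ'
  set W' := W.comap (e : (ZMod n × ZMod n) →ₗ[ZMod n] V) with hW'def
  have hidx : Γ'.index = Γ.index := Subgroup.index_comap_of_surjective Γ c.surjective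
  have hmem' : ∀ a b : ℤ, ((a : ZMod n), (b : ZMod n)) ∈ W' ↔
      (g * p : ℤ) ∣ a ∧ (g * q : ℤ) ∣ b := by
    intro a b
    have := hmem a b
    push_cast at this
    rw [mul_comm (g : ℤ), mul_comm (g : ℤ), ← this]
    rfl
  have hW' : ∀ γ ∈ Γ', ∀ w ∈ W', γ w ∈ W' := by
    intro γ hγ w hw
    change e (γ w) ∈ W
    rw [hc]
    exact hW _ hγ _ hw
  have habel' : ∀ γ ∈ Γ', ∀ δ ∈ Γ', ∀ w ∈ W', γ (δ w) = δ (γ w) := by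
    intro γ hγ δ hδ w hw
    apply e.injective
    rw [hc, hc, hc, hc]
    exact habel _ hγ _ hδ _ hw
  have hcard : Nat.card W = Nat.card W' :=
    (Nat.card_congr (e.toEquiv.subtypeEquiv fun _ => Iff.rfl)).symm
  have b1 := mul_le_index Γ' W' hg.ne' hpq hmem' hW'
  have b2 := le_index Γ' W' hm hmem' habel'
  rw [hcard, ← hidx]
  calc Nat.card W' ≤ (m * q) * (m * p) := card_le_of_diagonal W' hm hmem'
    _ = m * m * (p * q) := by ring
    _ ≤ Γ'.index * Γ'.index * Γ'.index := by gcongr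
    _ = Γ'.index ^ 3 := by ring
end

section
/- Let k/F be a Galois extension of number fields of degree n, let H_k and H_F denote the ideal class groups of k and F, and let H_k′ and H_F′ denote their prime-to-n parts (the subgroups of elements whose order is coprime to n). The Galois group Gal(k/F) acts on H_k through its action on the ring of integers of k, and this action preserves H_k′. Then the natural homomorphism H_F → H_k induced by extension of ideals (sending the class of an ideal 𝔞 of 𝒪_F to the class of 𝔞𝒪_k) restricts to an isomorphism from H_F′ onto the subgroup (H_k′)^{Gal(k/F)} of Galois-fixed elements of H_k′. -/
open NumberField
open scoped nonZeroDivisors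

/-! The argument plays extension of ideals off against the relative norm of ideals. Two ideal
identities carry it:

* `N(𝔞 𝒪_k) = 𝔞 ^ n` (`Ideal.relNorm_algebraMap` in Mathlib), so a class killed by `j` is killed
  by `n`, which gives injectivity on classes of order prime to `n`;
* `N(I) 𝒪_k = ∏ σ, σ(I)` (`map_relNorm_eq_prod`), so for a Galois-fixed class `y = [I]` one has
  `j [N(I)] = y ^ n`. When the order of `y` is prime to `n`, a suitable power of `[N(I)]` is then a
  preimage of `y`; raising to a high power of `n` first (`coprime_orderOf_pow`) ensures that the
  preimage has order prime to `n`.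

The second identity is clear for principal ideals, where it says that the norm of an element is the
product of its conjugates. The general case follows since some power `I ^ h` is principal and
`h`-th powers of ideals have unique roots in a Dedekind domain. -/

open Ideal in
/-- The case of a principal ideal, where the claim is `N(a) = ∏ σ, σ a`. -/
theorem map_relNorm_span_singleton (F k : Type*) [Field F] [NumberField F] [Field k]
    [NumberField k] [Algebra F k] [IsGalois F k] (a : 𝓞 k) :
    (relNorm (𝓞 F) (span {a})).map (algebraMap (𝓞 F) (𝓞 k)) =
      ∏ σ : k ≃ₐ[F] k, (span {a}).map (galRestrict (𝓞 F) F k (𝓞 k) σ) := by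
  have h : algebraMap (𝓞 F) (𝓞 k) (Algebra.intNorm (𝓞 F) (𝓞 k) a) =
      ∏ σ : k ≃ₐ[F] k, galRestrict (𝓞 F) F k (𝓞 k) σ a := by
    apply IsFractionRing.injective (𝓞 k) k
    rw [prod_galRestrict_eq_norm, ← IsScalarTower.algebraMap_apply (𝓞 F) (𝓞 k) k,
      IsScalarTower.algebraMap_apply (𝓞 F) F k, Algebra.algebraMap_intNorm (L := k),
      ← IsScalarTower.algebraMap_apply (𝓞 F) (𝓞 k) k, IsScalarTower.algebraMap_apply (𝓞 F) F k,
      IsIntegralClosure.algebraMap_mk']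
  rw [relNorm_singleton, map_span, Set.image_singleton, h, ← prod_span_singleton]
  refine Finset.prod_congr rfl fun σ _ => ?_
  rw [map_span, Set.image_singleton]

open Ideal in
/-- In a Galois extension, `N(I) 𝒪_k = ∏ σ, σ(I)`: both sides have the same `h`-th power, where `h`
is the class number of `k`, because `I ^ h` is principal. -/
theorem map_relNorm_eq_prod (F k : Type*) [Field F] [NumberField F] [Field k]
    [NumberField k] [Algebra F k] [IsGalois F k] (I : (Ideal (𝓞 k))⁰) :
    (relNorm (𝓞 F) (I : Ideal (𝓞 k))).map (algebraMap (𝓞 F) (𝓞 k)) =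
      ∏ σ : k ≃ₐ[F] k, (I : Ideal (𝓞 k)).map (galRestrict (𝓞 F) F k (𝓞 k) σ) := by
  obtain ⟨h, h0, hp⟩ : ∃ h : ℕ, h ≠ 0 ∧ ClassGroup.mk0 (I ^ h) = 1 :=
    ⟨Nat.card (ClassGroup (𝓞 k)), Nat.card_pos.ne', by rw [map_pow, pow_card_eq_one']⟩
  obtain ⟨a, ha⟩ := ((ClassGroup.mk0_eq_one_iff (I ^ h).2).mp hp).principal
  rw [submodule_span_eq, SubmonoidClass.coe_pow] at ha
  rw [← pow_left_inj h0, ← Ideal.map_pow, ← map_pow, ← Finset.prod_pow, ha,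
    map_relNorm_span_singleton]
  refine Finset.prod_congr rfl fun σ _ => ?_
  rw [← Ideal.map_pow, ha]

/-- Raising an element of finite order to a high power of `n` leaves an element of order prime
to `n`. -/
theorem coprime_orderOf_pow {G : Type*} [Group G] [Finite G] (c : G) {n : ℕ} :
    Nat.Coprime (orderOf (c ^ n ^ orderOf c)) n := by
  have hN : orderOf c ≠ 0 := (orderOf_pos c).ne'
  rw [orderOf_pow]
  set N := orderOf c with hN'
  refine Nat.coprime_of_dvd fun p hp h1 h2 => ?_
  -- the full power of `p` in `N` divides `gcd (N, n ^ N)`, since it has exponent less than `N`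
  have hv : p ^ N.factorization p ∣ N.gcd (n ^ N) :=
    Nat.dvd_gcd (Nat.ordProj_dvd N p)
      ((pow_dvd_pow p (Nat.factorization_lt p hN).le).trans (pow_dvd_pow_of_dvd h2 N))
  refine Nat.pow_succ_factorization_not_dvd hN hp ?_
  rw [pow_succ]
  refine (mul_dvd_mul hv h1).trans ?_
  rw [Nat.mul_div_cancel' (Nat.gcd_dvd_left N (n ^ N))]

/-- Let `k/F` be a Galois extension of number fields of degree `n`. The Galois group acts on
the ideal class group `H_k` through its action on `𝓞_k`, and this action preserves the
prime-to-`n` part `H_k′`. The extension-of-ideals map `H_F → H_k` restricts to an isomorphism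
from the prime-to-`n` part `H_F′` onto the Galois-fixed subgroup `(H_k′)^{Gal(k/F)}`. -/
theorem stmt13 (F k : Type*) [Field F] [NumberField F] [Field k] [NumberField k]
    [Algebra F k] [IsGalois F k]
    (n : ℕ) (hn : n = Module.finrank F k)
    -- `j` is the map on class groups induced by extension of ideals `𝔞 ↦ 𝔞𝒪_k`
    (j : ClassGroup (𝓞 F) →* ClassGroup (𝓞 k))
    (hj : ∀ (I : (Ideal (𝓞 F))⁰) (J : (Ideal (𝓞 k))⁰),
      (J : Ideal (𝓞 k)) = (I : Ideal (𝓞 F)).map (algebraMap (𝓞 F) (𝓞 k)) →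
      j (ClassGroup.mk0 I) = ClassGroup.mk0 J)
    -- `act σ` is the automorphism of the class group induced by `σ ∈ Gal(k/F)`,
    -- acting through the restriction of `σ` to `𝓞_k`
    (act : (k ≃ₐ[F] k) → ClassGroup (𝓞 k) → ClassGroup (𝓞 k))
    (hact : ∀ (σ : k ≃ₐ[F] k) (I J : (Ideal (𝓞 k))⁰),
      (J : Ideal (𝓞 k)) = (I : Ideal (𝓞 k)).map (galRestrict (𝓞 F) F k (𝓞 k) σ) →
      act σ (ClassGroup.mk0 I) = ClassGroup.mk0 J) :
    -- the Galois action preserves the prime-to-`n` part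
    (∀ (σ : k ≃ₐ[F] k) (y : ClassGroup (𝓞 k)), Nat.Coprime (orderOf y) n →
        Nat.Coprime (orderOf (act σ y)) n) ∧
    -- `j` maps `H_F′` into the Galois-fixed part of `H_k′` ...
    (∀ x : ClassGroup (𝓞 F), Nat.Coprime (orderOf x) n →
        Nat.Coprime (orderOf (j x)) n ∧ ∀ σ : k ≃ₐ[F] k, act σ (j x) = j x) ∧
    -- ... injectively ...
    (∀ x₁ x₂ : ClassGroup (𝓞 F), Nat.Coprime (orderOf x₁) n → Nat.Coprime (orderOf x₂) n →
        j x₁ = j x₂ → x₁ = x₂) ∧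
    -- ... and surjectively onto `(H_k′)^{Gal(k/F)}`
    (∀ y : ClassGroup (𝓞 k), Nat.Coprime (orderOf y) n → (∀ σ : k ≃ₐ[F] k, act σ y = y) →
        ∃ x : ClassGroup (𝓞 F), Nat.Coprime (orderOf x) n ∧ j x = y) := by
  have hinj : Function.Injective (algebraMap (𝓞 F) (𝓞 k)) := FaithfulSMul.algebraMap_injective _ _
  have hmapF (I : (Ideal (𝓞 F))⁰) : (I : Ideal (𝓞 F)).map (algebraMap (𝓞 F) (𝓞 k)) ∈
      (Ideal (𝓞 k))⁰ := by
    rw [mem_nonZeroDivisors_iff_ne_zero, Ideal.zero_eq_bot, Ne,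
      Ideal.map_eq_bot_iff_of_injective hinj]
    exact nonZeroDivisors.coe_ne_zero I
  have hmapk (σ : k ≃ₐ[F] k) (I : (Ideal (𝓞 k))⁰) :
      (I : Ideal (𝓞 k)).map (galRestrict (𝓞 F) F k (𝓞 k) σ) ∈ (Ideal (𝓞 k))⁰ := by
    rw [mem_nonZeroDivisors_iff_ne_zero, Ideal.zero_eq_bot, Ne,
      Ideal.map_eq_bot_iff_of_injective (galRestrict (𝓞 F) F k (𝓞 k) σ).injective]
    exact nonZeroDivisors.coe_ne_zero I
  have act_mul (σ : k ≃ₐ[F] k) (x y : ClassGroup (𝓞 k)) : act σ (x * y) = act σ x * act σ y := by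
    obtain ⟨I, rfl⟩ := ClassGroup.mk0_surjective x
    obtain ⟨J, rfl⟩ := ClassGroup.mk0_surjective y
    rw [← map_mul, hact σ I ⟨_, hmapk σ I⟩ rfl, hact σ J ⟨_, hmapk σ J⟩ rfl, ← map_mul]
    exact hact σ _ _ (by simp [Ideal.map_mul])
  refine ⟨fun σ y hy => ?_, fun x hx => ⟨?_, fun σ => ?_⟩, fun x₁ x₂ h₁ h₂ h => ?_,
    fun y hy hfix => ?_⟩
  · exact hy.coprime_dvd_left (orderOf_map_dvd (MonoidHom.mk' (act σ) (act_mul σ)) y)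
  · exact hx.coprime_dvd_left (orderOf_map_dvd j x)
  · obtain ⟨I, rfl⟩ := ClassGroup.mk0_surjective x
    rw [hj I ⟨_, hmapF I⟩ rfl]
    refine hact σ _ _ ?_
    change Ideal.map _ _ = Ideal.map (galRestrict (𝓞 F) F k (𝓞 k) σ : 𝓞 k →+* 𝓞 k) _
    rw [Ideal.map_map]
    congr 1
    ext1 a
    exact ((galRestrict (𝓞 F) F k (𝓞 k) σ).commutes a).symm
  · -- `j (x₁ / x₂) = 1` gives `(x₁ / x₂) ^ n = 1` by taking relative norms
    rw [← div_eq_one]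
    have hc : Nat.Coprime (orderOf (x₁ / x₂)) n := by
      rw [div_eq_mul_inv]
      refine Nat.Coprime.coprime_dvd_left (Commute.all _ _).orderOf_mul_dvd_mul_orderOf ?_
      rw [orderOf_inv]
      exact h₁.mul_left h₂
    have hz : j (x₁ / x₂) = 1 := by rw [map_div, h, div_self']
    generalize x₁ / x₂ = z at hc hz
    obtain ⟨I, rfl⟩ := ClassGroup.mk0_surjective z
    rw [hj I ⟨_, hmapF I⟩ rfl, ClassGroup.mk0_eq_one_iff] at hz
    obtain ⟨a, ha⟩ := hz.principal
    rw [Ideal.submodule_span_eq] at ha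
    have hnI : (ClassGroup.mk0 I) ^ n = 1 := by
      rw [← map_pow, ClassGroup.mk0_eq_one_iff (I ^ n).2, SubmonoidClass.coe_pow, hn,
        IsFractionRing.finrank_eq (𝓞 F) F (𝓞 k) k, ← Ideal.relNorm_algebraMap (𝓞 k), ha, Ideal.relNorm_singleton]
      exact ⟨⟨_, rfl⟩⟩
    rw [← orderOf_eq_one_iff]
    exact Nat.eq_one_of_dvd_coprimes hc dvd_rfl (orderOf_dvd_of_pow_eq_one hnI)
  · obtain ⟨c, hc⟩ : ∃ c : ClassGroup (𝓞 F), j c = y ^ n := by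
      obtain ⟨I, rfl⟩ := ClassGroup.mk0_surjective y
      have hN : Ideal.relNorm (𝓞 F) (I : Ideal (𝓞 k)) ∈ (Ideal (𝓞 F))⁰ := by
        rw [mem_nonZeroDivisors_iff_ne_zero, Ideal.zero_eq_bot, Ne, Ideal.relNorm_eq_bot_iff]
        exact nonZeroDivisors.coe_ne_zero I
      refine ⟨ClassGroup.mk0 ⟨_, hN⟩, ?_⟩
      rw [hj ⟨_, hN⟩ (∏ σ : k ≃ₐ[F] k, ⟨_, hmapk σ I⟩)
        (by rw [map_relNorm_eq_prod, SubmonoidClass.coe_finsetProd]), map_prod,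
        Finset.prod_congr rfl fun σ _ => (hact σ I ⟨_, hmapk σ I⟩ rfl).symm.trans (hfix σ),
        Finset.prod_const, Finset.card_univ, ← Nat.card_eq_fintype_card,
        IsGalois.card_aut_eq_finrank, hn]
    -- `u` inverts `n ^ (N + 1)` modulo the order of `y`, where `N` is the order of `c`
    obtain ⟨u, hu⟩ := exists_pow_eq_self_of_coprime
      (Nat.Coprime.pow_left (orderOf c + 1) hy.symm)
    refine ⟨(c ^ n ^ orderOf c) ^ u,
      coprime_orderOf_pow c |>.coprime_dvd_left (orderOf_pow_dvd u), ?_⟩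
    rw [map_pow, map_pow, hc, ← pow_mul y, ← pow_succ', hu]
end

section
/- Let k/ℚ be a Galois extension with Galois group Gal(k/ℚ) ≅ (ℤ/2ℤ)^r, and let k₁, …, k_N be the complete list of quadratic subfields of k (so N = 2^r − 1). For each i, the relative ideal norm from 𝒪_k to 𝒪_{k_i} induces a group homomorphism on ideal class groups H_k → H_{k_i}. Then the resulting map on odd parts, H_k^{odd} → ⊕_{i=1}^{N} H_{k_i}^{odd}, whose i-th coordinate is the norm map, is an isomorphism of abelian groups. -/
/-!
Write `G = Gal(k/ℚ)`, let `H_K ≤ G` be the subgroup fixing a quadratic subfield `K`, let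
`j_K : Cl(K) → Cl(k)` be extension of ideals between the class groups and `ν_K` the norm.
Three facts carry the proof.

* `j_K (ν_K [I]) = ∏_{h ∈ H_K} [h • I]` (`extendedHom_mk0_relNorm`), and `∏_{g ∈ G} [g • I] = 1`
  because this product is extended from an ideal of `ℤ` (`prod_smulClass_eq_one`). Both come from
  the identity of ideals `map_relNorm_eq_prod_smul`, which holds for principal ideals by the
  formula for the norm of an element; the general case follows by raising to the power of the
  class number, since an ideal of a Dedekind domain is determined by any of its positive powers.
* `ν_K ∘ j_K` is the power map with exponent `[k : K] = 2 ^ (r - 1)`, which is bijective on odd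
  parts.
* For `K ≠ L` quadratic, `ν_L ∘ j_K` is trivial on odd parts. Indeed, pick `s ∈ H_K` outside
  `H_L`: it fixes ideals extended from `K`, and `G = H_L ⊔ H_L s`, so the square of
  `∏_{h ∈ H_L} [h • I]` is `∏_{g ∈ G} [g • I] = 1` (`extendedHom_mk0_sq_eq_one_of_ne`).

Surjectivity follows from the last two facts: a preimage of `(w_K)` is `∏ j_K y_K` with
`y_K ^ 2 ^ (r - 1) = w_K`. For injectivity, the subgroups of index two are the kernels of the
nonzero characters `χ` of `G`, viewed as an `𝔽₂`-vector space, and every `g ≠ 1` is killed by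
exactly half of the `2 ^ r` characters, so that
`∏_χ ∏_{g ∈ ker χ} [g • I] = (∏_{g ∈ G} [g • I]) ^ 2 ^ (r - 1) * [I] ^ 2 ^ (r - 1)`
(`prod_prod_charKer`). If `ν_K [I] = 1` for all `K` this reads `[I] ^ 2 ^ (r - 1) = 1`, which
forces `[I] = 1` when `[I]` has odd order. The correspondence with nonzero characters also gives
the number of quadratic subfields.
-/

open NumberField
open scoped nonZeroDivisors

/-! ### Characters and subgroups of index two -/

section
variable {G : Type*} [Group G] {r : ℕ} (e : G ≃* Multiplicative (Fin r → ZMod 2))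

/-- The kernel in `G` of the character of `G ≅ (ℤ/2)^r` given by an `𝔽₂`-linear functional `χ`
on `(ℤ/2)^r`. It has index two, unless `χ = 0`, when it is all of `G`. -/
def charKer (χ : Module.Dual (ZMod 2) (Fin r → ZMod 2)) : Subgroup G :=
  ((AddMonoidHom.toMultiplicative χ.toAddMonoidHom).comp e.toMonoidHom).ker

theorem mem_charKer {χ : Module.Dual (ZMod 2) (Fin r → ZMod 2)} {g : G} :
    g ∈ charKer e χ ↔ χ (e g).toAdd = 0 := Iff.rfl

theorem index_charKer {χ : Module.Dual (ZMod 2) (Fin r → ZMod 2)} (hχ : χ ≠ 0) :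
    (charKer e χ).index = 2 := by
  have hs : Function.Surjective
      ((AddMonoidHom.toMultiplicative χ.toAddMonoidHom).comp e.toMonoidHom) :=
    (LinearMap.surjective hχ).comp e.surjective
  rw [charKer, Subgroup.index_ker, MonoidHom.range_eq_top.2 hs, Subgroup.card_top]
  exact Nat.card_zmod 2

/-- A functional with values in `𝔽₂` is determined by its kernel. -/
theorem charKer_injective : Function.Injective (charKer e) := by
  intro χ ψ h
  refine LinearMap.ext fun v => ?_
  have hv : χ v = 0 ↔ ψ v = 0 := by
    simpa [mem_charKer] using SetLike.ext_iff.1 h (e.symm (.ofAdd v))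
  generalize χ v = a at hv
  generalize ψ v = b at hv
  revert a b
  decide

/-- Every subgroup of index two is the kernel of a nonzero character, namely the one with value
`0` on the subgroup and `1` off it. -/
theorem exists_charKer_eq {H : Subgroup G} (hH : H.index = 2) :
    ∃ χ, χ ≠ 0 ∧ charKer e χ = H := by
  classical
  let f : (Fin r → ZMod 2) →+ ZMod 2 :=
    { toFun := fun v => if e.symm (.ofAdd v) ∈ H then 0 else 1
      map_zero' := by simp
      map_add' := fun v w => by
        rw [ofAdd_add, map_mul, Subgroup.mul_mem_iff_of_index_two hH]
        by_cases h1 : e.symm (.ofAdd v) ∈ H <;> by_cases h2 : e.symm (.ofAdd w) ∈ H <;>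
          simp [h1, h2]
        decide }
  have hf : charKer e (f.toZModLinearMap 2) = H := by
    ext g
    simp [mem_charKer, f]
  refine ⟨f.toZModLinearMap 2, ?_, hf⟩
  intro h0
  rw [h0] at hf
  rw [← hf, Subgroup.index_eq_one.2] at hH
  · omega
  · ext; simp [mem_charKer]

theorem card_dual_zmod_two (r : ℕ) : Nat.card (Module.Dual (ZMod 2) (Fin r → ZMod 2)) = 2 ^ r := by
  rw [Module.natCard_eq_pow_finrank (K := ZMod 2), Subspace.dual_finrank_eq]
  simp

noncomputable instance dualFintype (r : ℕ) : Fintype (Module.Dual (ZMod 2) (Fin r → ZMod 2)) :=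
  have : Finite (Module.Dual (ZMod 2) (Fin r → ZMod 2)) := Module.finite_of_finite (ZMod 2)
  Fintype.ofFinite _

open scoped Classical in
/-- Half of the functionals vanish at a given `v ≠ 0`: they form the kernel of the surjective map
`χ ↦ χ v`. -/
theorem card_dual_apply_eq_zero {v : Fin r → ZMod 2} (hv : v ≠ 0) :
    2 * Fintype.card {χ : Module.Dual (ZMod 2) (Fin r → ZMod 2) // χ v = 0} = 2 ^ r := by
  have hv' : Module.Dual.eval (ZMod 2) _ v ≠ 0 := by
    intro h
    exact hv ((Module.forall_dual_apply_eq_zero_iff (ZMod 2) v).1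
      (fun φ => LinearMap.congr_fun h φ))
  have hs := LinearMap.surjective hv'
  have h := (Module.Dual.eval (ZMod 2) _ v).toAddMonoidHom.ker.card_mul_index
  rw [AddSubgroup.index_ker, AddMonoidHom.range_eq_top.2 hs, AddSubgroup.card_top,
    card_dual_zmod_two, Nat.card_zmod] at h
  rw [← h, mul_comm, ← Nat.card_eq_fintype_card]
  rfl

open scoped Classical in
/-- Exchanging the products, `f g` occurs once for each character killing `g`: `2 ^ (r - 1)` times
for `g ≠ 1`, and `2 ^ r = 2 ^ (r - 1) + 2 ^ (r - 1)` times for `g = 1`. -/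
theorem prod_prod_charKer [Fintype G] {C : Type*} [CommMonoid C] (hr : 1 ≤ r) (f : G → C) :
    ∏ χ, ∏ g : charKer e χ, f g = (∏ g, f g) ^ 2 ^ (r - 1) * f 1 ^ 2 ^ (r - 1) := by
  have h1 : ∀ g : G, ∏ χ : Module.Dual (ZMod 2) (Fin r → ZMod 2),
      (if g ∈ charKer e χ then f g else 1) =
        f g ^ 2 ^ (r - 1) * if g = 1 then f 1 ^ 2 ^ (r - 1) else 1 := by
    intro g
    obtain ⟨r, rfl⟩ := Nat.exists_eq_add_of_le' hr
    rw [add_tsub_cancel_right, ← Finset.prod_filter, Finset.prod_const]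
    split_ifs with hg
    · subst hg
      have : Fintype.card (Module.Dual (ZMod 2) (Fin (r+1) → ZMod 2)) = 2 ^ (r + 1) := by
        rw [← Nat.card_eq_fintype_card, card_dual_zmod_two]
      simp [one_mem, this, pow_succ, pow_mul]
    · have hv : (e g).toAdd ≠ 0 := by simpa using hg
      have := card_dual_apply_eq_zero hv
      rw [pow_succ', Fintype.card_subtype] at this
      simp only [mem_charKer]
      rw [mul_one, Nat.eq_of_mul_eq_mul_left two_pos this]
  have h2 : ∀ χ, ∏ g : charKer e χ, f g = ∏ g, (if g ∈ charKer e χ then f g else 1) := by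
    intro χ
    rw [← Finset.prod_filter]
    exact (Finset.prod_subtype _ (by simp) f).symm
  simp_rw [h2]
  rw [Finset.prod_comm]
  simp_rw [h1]
  rw [Finset.prod_mul_distrib, Finset.prod_pow]
  simp
end

/-! ### Relative norms as products of conjugates -/

section
open scoped Pointwise
attribute [local instance] FractionRing.liftAlgebra in
theorem algebraMap_intNorm_eq_prod_smul (G A B : Type*) [Group G] [Fintype G]
    [CommRing A] [CommRing B] [IsDomain A] [IsIntegrallyClosed A] [IsDomain B] [IsIntegrallyClosed B] [Algebra A B]
    [Module.Finite A B] [Module.IsTorsionFree A B] [MulSemiringAction G B] [IsGaloisGroup G A B]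
    (x : B) : algebraMap A B (Algebra.intNorm A B x) = ∏ g : G, g • x := by
  let := IsFractionRing.mulSemiringAction G B (FractionRing B)
  have h := IsGaloisGroup.toFractionRing G A B
  have : IsGalois (FractionRing A) (FractionRing B) := IsGaloisGroup.isGalois G _ _
  rw [Algebra.algebraMap_intNorm_of_isGalois,
    ← (IsGaloisGroup.mulEquivAlgEquiv G A B).toEquiv.prod_comp]
  rfl

/-- In a Galois extension `B/A` of Dedekind domains with group `G`, the relative norm of an ideal,
extended back to `B`, is the product of its conjugates. A power of `I` is principal, generated by
`x` say, and for `x` this is the corresponding formula for elements; powers of ideals with a fixed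
positive exponent can be compared instead of the ideals themselves. -/
theorem map_relNorm_eq_prod_smul (G A B : Type*) [Group G] [Fintype G] [CommRing A] [CommRing B]
    [IsDedekindDomain A] [IsDedekindDomain B] [Algebra A B]
    [Module.Finite A B] [Module.IsTorsionFree A B] [MulSemiringAction G B] [IsGaloisGroup G A B]
    [Finite (ClassGroup B)] (I : Ideal B) :
    (Ideal.relNorm A I).map (algebraMap A B) = ∏ g : G, g • I := by
  by_cases hI : I = ⊥
  · subst hI
    rw [Ideal.relNorm_bot, Ideal.map_bot]
    refine (Finset.prod_eq_zero (Finset.mem_univ (1 : G)) ?_).symm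
    rw [one_smul]; rfl
  have hn : Nat.card (ClassGroup B) ≠ 0 := Nat.card_pos.ne'
  obtain ⟨x, hx⟩ : (I ^ Nat.card (ClassGroup B)).IsPrincipal := by
    have hI' : I ∈ (Ideal B)⁰ := mem_nonZeroDivisors_iff_ne_zero.mpr hI
    have := pow_card_eq_one' (x := ClassGroup.mk0 ⟨I, hI'⟩)
    rw [← map_pow] at this
    exact (ClassGroup.mk0_eq_one_iff (pow_mem hI' _)).mp this
  rw [← pow_left_inj hn, ← Ideal.map_pow, ← map_pow, ← Finset.prod_pow]
  have h2 : ∀ g : G, (g • I) ^ Nat.card (ClassGroup B) = Ideal.span {g • x} := by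
    intro g
    rw [← smul_pow', hx, Ideal.pointwise_smul_def, Ideal.submodule_span_eq, Ideal.map_span,
      Set.image_singleton]
    rfl
  simp_rw [h2]
  rw [hx, Ideal.submodule_span_eq, Ideal.relNorm_singleton, Ideal.map_span, Set.image_singleton,
    algebraMap_intNorm_eq_prod_smul G, Ideal.prod_span_singleton]

/-- The ideal class of the conjugate `g • I`. -/
noncomputable def smulClass {k : Type*} [Field k] [NumberField k] (I : (Ideal (𝓞 k))⁰)
    (g : k ≃ₐ[ℚ] k) : ClassGroup (𝓞 k) :=
  ClassGroup.mk0 ⟨g • (I : Ideal (𝓞 k)), by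
    rw [mem_nonZeroDivisors_iff_ne_zero, ← smul_zero g, (MulAction.injective g).ne_iff]
    exact nonZeroDivisors.coe_ne_zero I⟩

end

section
variable {k : Type*} [Field k] [NumberField k]

theorem smulClass_one (I : (Ideal (𝓞 k))⁰) : smulClass I 1 = ClassGroup.mk0 I := by
  simp [smulClass]

variable [IsGalois ℚ k]

/-- The product of all conjugates of `I` is extended from an ideal of `ℤ`, hence principal. -/
theorem prod_smulClass_eq_one (I : (Ideal (𝓞 k))⁰) : ∏ g : k ≃ₐ[ℚ] k, smulClass I g = 1 := by
  simp only [smulClass]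
  rw [← map_prod, ClassGroup.mk0_eq_one_iff (Subtype.prop _), Submonoid.coe_finsetProd]
  simp only
  rw [← map_relNorm_eq_prod_smul (k ≃ₐ[ℚ] k) ℤ (𝓞 k)]
  have := IsPrincipalIdealRing.principal (Ideal.relNorm ℤ (I : Ideal (𝓞 k)))
  exact this.map_ringHom _

theorem isGaloisGroup_ringOfIntegers (K : IntermediateField ℚ k) :
    IsGaloisGroup K.fixingSubgroup (𝓞 K) (𝓞 k) :=
  have : IsGaloisGroup K.fixingSubgroup K k := IsGaloisGroup.intermediateField (k ≃ₐ[ℚ] k) ℚ k K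
  IsGaloisGroup.of_isFractionRing K.fixingSubgroup (𝓞 K) (𝓞 k) K k

open scoped Classical in
/-- The norm to `K` followed by extension to `k` sends the class of `I` to the product of the
classes of the conjugates of `I` under `Gal(k/K)`. -/
theorem extendedHom_mk0_relNorm (K : IntermediateField ℚ k) (I : (Ideal (𝓞 k))⁰)
    (J : (Ideal (𝓞 K))⁰) (hJ : (J : Ideal (𝓞 K)) = Ideal.relNorm (𝓞 K) (I : Ideal (𝓞 k))) :
    ClassGroup.extendedHom (𝓞 K) (𝓞 k) (ClassGroup.mk0 J) =
      ∏ h : K.fixingSubgroup, smulClass I h := by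
  have : IsGaloisGroup K.fixingSubgroup (𝓞 K) (𝓞 k) := isGaloisGroup_ringOfIntegers K
  simp only [smulClass]
  rw [ClassGroup.extendedHom_mk0, ← map_prod]
  congr 1
  ext1
  change (J : Ideal (𝓞 K)).map (algebraMap (𝓞 K) (𝓞 k)) = _
  rw [Submonoid.coe_finsetProd, hJ, map_relNorm_eq_prod_smul K.fixingSubgroup (𝓞 K) (𝓞 k)]
  rfl

theorem finrank_ringOfIntegers (K : IntermediateField ℚ k) (hK : Module.finrank ℚ K = 2)
    (r : ℕ) (hr : 1 ≤ r) (hG : Nat.card (k ≃ₐ[ℚ] k) = 2 ^ r) : Module.finrank (𝓞 K) (𝓞 k) = 2 ^ (r - 1) := by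
  have : IsGaloisGroup K.fixingSubgroup (𝓞 K) (𝓞 k) := isGaloisGroup_ringOfIntegers K
  rw [← IsGaloisGroup.card_eq_finrank' K.fixingSubgroup (𝓞 K) (𝓞 k)]
  have h := K.fixingSubgroup.card_mul_index
  rw [← IntermediateField.finrank_eq_fixingSubgroup_index, hK, hG] at h
  obtain ⟨r, rfl⟩ := Nat.exists_eq_add_of_le' hr
  simp only [pow_succ, add_tsub_cancel_right] at h ⊢
  omega

/-- For `s ∉ H` and `H` of index two, `G` is the disjoint union of `H` and `H s`. -/
theorem prod_eq_of_index_two {G C : Type*} [Group G] [Fintype G] [CommMonoid C] (H : Subgroup G)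
    [DecidablePred (· ∈ H)] (hH : H.index = 2) (s : G) (hs : s ∉ H) (f : G → C) :
    ∏ g, f g = (∏ h : H, f h) * ∏ h : H, f (h * s) := by
  rw [← Fintype.prod_subtype_mul_prod_subtype (fun g => g ∈ H) f]
  congr 1
  symm
  refine Fintype.prod_equiv ((Equiv.mulRight s).subtypeEquiv (p := (· ∈ H)) (q := (· ∉ H))
    fun a => ?_) _ _ fun _ => rfl
  simp [Subgroup.mul_mem_iff_of_index_two hH, hs]

omit [IsGalois ℚ k] in
open scoped Pointwise in
/-- Elements of `Gal(k/K)` fix the ideals of `k` that are extended from `K`. -/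
theorem smulClass_extendedIdeal (K : IntermediateField ℚ k) (J : (Ideal (𝓞 K))⁰) (s t : k ≃ₐ[ℚ] k)
    (hs : s ∈ K.fixingSubgroup) :
    smulClass (ClassGroup.extendedIdeal (𝓞 K) (𝓞 k) J) (t * s) =
    smulClass (ClassGroup.extendedIdeal (𝓞 K) (𝓞 k) J) t := by
  simp only [smulClass]
  congr 2
  rw [mul_smul]
  congr 1
  rw [Ideal.pointwise_smul_def, Ideal.map_map]
  congr 1
  ext x
  exact (mem_fixingSubgroup_iff _).1 hs _ (x : K).2

/-! ### Elements of odd order -/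

theorem odd_orderOf_map {C D : Type*} [Group C] [Group D] (f : C →* D) {x : C}
    (hx : Odd (orderOf x)) : Odd (orderOf (f x)) :=
  hx.of_dvd_nat (orderOf_map_dvd f x)

theorem eq_one_of_odd_of_pow {C : Type*} [Group C] {x : C} (hx : Odd (orderOf x)) (m : ℕ)
    (h : x ^ 2 ^ m = 1) : x = 1 :=
  orderOf_eq_one_iff.1 <| Nat.Coprime.eq_one_of_dvd (hx.coprime_two_right.pow_right m)
    (orderOf_dvd_of_pow_eq_one h)

theorem odd_orderOf_mul {C : Type*} [CommGroup C] {x y : C} (hx : Odd (orderOf x))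
    (hy : Odd (orderOf y)) : Odd (orderOf (x * y)) :=
  (hx.mul hy).of_dvd_nat (Commute.all x y).orderOf_mul_dvd_mul_orderOf

/-! ### The decomposition of the class group -/

/-- If `I` is extended from a quadratic field `K ≠ L`, the class of its norm to `L`, extended back
to `k`, has square one: with `s ∈ Gal(k/K)` not fixing `L`, the conjugates of `I` by `h` and `h s`
agree for `h ∈ Gal(k/L)`, so the square is the product of all conjugates of `I`. -/
theorem extendedHom_mk0_sq_eq_one_of_ne (K L : IntermediateField ℚ k) (hK : Module.finrank ℚ K = 2)
    (hL : Module.finrank ℚ L = 2) (hne : K ≠ L) (J : (Ideal (𝓞 K))⁰) (N : (Ideal (𝓞 L))⁰)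
    (hN : (N : Ideal (𝓞 L)) =
      Ideal.relNorm (𝓞 L) (ClassGroup.extendedIdeal (𝓞 K) (𝓞 k) J : Ideal (𝓞 k))) :
    ClassGroup.extendedHom (𝓞 L) (𝓞 k) (ClassGroup.mk0 N) ^ 2 = 1 := by
  classical
  obtain ⟨s, hsK, hsL⟩ : ∃ s ∈ K.fixingSubgroup, s ∉ L.fixingSubgroup := by
    by_contra! h
    refine hne (IntermediateField.eq_of_le_of_finrank_eq ?_ (hL.trans hK.symm)).symm
    exact (IsGalois.intermediateFieldEquivSubgroup (F := ℚ) (E := k)).le_iff_le.1 h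
  rw [extendedHom_mk0_relNorm L _ N hN]
  have h := prod_eq_of_index_two L.fixingSubgroup
    (by rw [← IntermediateField.finrank_eq_fixingSubgroup_index, hL]) s hsL
    (smulClass (ClassGroup.extendedIdeal (𝓞 K) (𝓞 k) J))
  simp_rw [smulClass_extendedIdeal K J s _ hsK] at h
  rw [prod_smulClass_eq_one] at h
  rw [pow_two, h]

end

set_option synthInstance.maxHeartbeats 1000000 in
set_option maxHeartbeats 1000000 in
/-- Let `k/ℚ` be Galois with group `(ℤ/2ℤ)^r` and let `k₁, …, k_N` be its quadratic subfields
(so `N = 2^r - 1`). The relative ideal norms induce maps `H_k → H_{k_i}` on class groups, and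
the resulting map on odd parts `H_k^odd → ⊕ᵢ H_{k_i}^odd` is an isomorphism. -/
theorem stmt14 (k : Type*) [Field k] [NumberField k] [IsGalois ℚ k] (r : ℕ) (hr : 1 ≤ r)
    (hGal : Nonempty ((k ≃ₐ[ℚ] k) ≃* Multiplicative (Fin r → ZMod 2)))
    -- `ν K` is the map on class groups induced by the relative ideal norm from `𝓞 k`
    -- to `𝓞 K`, for each quadratic subfield `K` of `k`
    (ν : (K : IntermediateField ℚ k) → ClassGroup (𝓞 k) →* ClassGroup (𝓞 K))
    (hν : ∀ K : IntermediateField ℚ k, Module.finrank ℚ K = 2 →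
      ∀ (I : (Ideal (𝓞 k))⁰) (J : (Ideal (𝓞 K))⁰),
        (J : Ideal (𝓞 K)) =
          Ideal.span (Algebra.intNorm (𝓞 K) (𝓞 k) ''
            ((I : Ideal (𝓞 k)) : Set (𝓞 k))) →
        ν K (ClassGroup.mk0 I) = ClassGroup.mk0 J) :
    -- there are `N = 2^r - 1` quadratic subfields
    Nat.card {K : IntermediateField ℚ k // Module.finrank ℚ K = 2} = 2 ^ r - 1 ∧
    -- each `ν K` maps the odd part of `H_k` into the odd part of `H_{k_i}` ...
    (∀ x : ClassGroup (𝓞 k), Odd (orderOf x) →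
      ∀ K : IntermediateField ℚ k, Module.finrank ℚ K = 2 → Odd (orderOf (ν K x))) ∧
    -- ... the combined map on odd parts is injective ...
    (∀ x y : ClassGroup (𝓞 k), Odd (orderOf x) → Odd (orderOf y) →
      (∀ K : IntermediateField ℚ k, Module.finrank ℚ K = 2 → ν K x = ν K y) → x = y) ∧
    -- ... and surjective onto `⊕ᵢ H_{k_i}^odd`
    (∀ w : (K : IntermediateField ℚ k) → ClassGroup (𝓞 K),
      (∀ K : IntermediateField ℚ k, Module.finrank ℚ K = 2 → Odd (orderOf (w K))) →
      ∃ x : ClassGroup (𝓞 k), Odd (orderOf x) ∧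
        ∀ K : IntermediateField ℚ k, Module.finrank ℚ K = 2 → ν K x = w K) := by
  classical
  obtain ⟨e⟩ := hGal
  have hG : Nat.card (k ≃ₐ[ℚ] k) = 2 ^ r := by
    rw [Nat.card_congr e.toEquiv]
    simp [Nat.card_eq_fintype_card]
  have hrel (K : IntermediateField ℚ k) (hK : Module.finrank ℚ K = 2) (I : (Ideal (𝓞 k))⁰) :
      ∃ N : (Ideal (𝓞 K))⁰, (N : Ideal (𝓞 K)) = Ideal.relNorm (𝓞 K) (I : Ideal (𝓞 k)) ∧
        ν K (ClassGroup.mk0 I) = ClassGroup.mk0 N := by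
    refine ⟨⟨Ideal.relNorm (𝓞 K) (I : Ideal (𝓞 k)), ?_⟩, rfl, hν K hK I _ rfl⟩
    rw [mem_nonZeroDivisors_iff_ne_zero]
    exact fun h => nonZeroDivisors.coe_ne_zero I (Ideal.relNorm_eq_bot_iff.1 h)
  have hself (K : IntermediateField ℚ k) (hK : Module.finrank ℚ K = 2) (y : ClassGroup (𝓞 K)) :
      ν K (ClassGroup.extendedHom (𝓞 K) (𝓞 k) y) = y ^ 2 ^ (r - 1) := by
    obtain ⟨J, rfl⟩ := ClassGroup.mk0_surjective y
    rw [ClassGroup.extendedHom_mk0, ← map_pow, ← finrank_ringOfIntegers K hK r hr hG]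
    refine hν K hK _ _ ?_
    exact (Ideal.relNorm_algebraMap (R := 𝓞 K) (𝓞 k) (J : Ideal (𝓞 K))).symm
  have hother (K L : IntermediateField ℚ k) (hK : Module.finrank ℚ K = 2)
      (hL : Module.finrank ℚ L = 2) (hne : K ≠ L) (y : ClassGroup (𝓞 K)) (hy : Odd (orderOf y)) :
      ν L (ClassGroup.extendedHom (𝓞 K) (𝓞 k) y) = 1 := by
    have hodd := odd_orderOf_map (ν L) (odd_orderOf_map (ClassGroup.extendedHom (𝓞 K) (𝓞 k)) hy)
    have h1 : ClassGroup.extendedHom (𝓞 L) (𝓞 k)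
        (ν L (ClassGroup.extendedHom (𝓞 K) (𝓞 k) y)) = 1 := by
      refine eq_one_of_odd_of_pow (odd_orderOf_map _ hodd) 1 ?_
      obtain ⟨J, rfl⟩ := ClassGroup.mk0_surjective y
      rw [ClassGroup.extendedHom_mk0]
      obtain ⟨N, hN, hNν⟩ := hrel L hL (ClassGroup.extendedIdeal (𝓞 K) (𝓞 k) J)
      rw [hNν, pow_one]
      exact extendedHom_mk0_sq_eq_one_of_ne K L hK hL hne J N hN
    -- `ν L ∘ j_L` is the power map with exponent `2 ^ (r - 1)`, so `j_L` is injective on elements of odd order.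
    refine eq_one_of_odd_of_pow hodd (r - 1) ?_
    rw [← hself L hL, h1, map_one]
  refine ⟨?_, fun x hx K _ => odd_orderOf_map _ hx, ?_, ?_⟩
  · rw [← card_dual_zmod_two r]
    have hfin : ∀ χ : {χ : Module.Dual (ZMod 2) (Fin r → ZMod 2) // χ ≠ 0},
        Module.finrank ℚ (IntermediateField.fixedField (charKer e χ.1)) = 2 := fun χ => by
      rw [IntermediateField.finrank_eq_fixingSubgroup_index,
        IntermediateField.fixingSubgroup_fixedField, index_charKer e χ.2]
    rw [← Nat.card_congr (Equiv.ofBijective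
      (fun χ : {χ : Module.Dual (ZMod 2) (Fin r → ZMod 2) // χ ≠ 0} =>
        (⟨_, hfin χ⟩ : {K : IntermediateField ℚ k // Module.finrank ℚ K = 2})) ⟨?_, ?_⟩)]
    · rw [Nat.card_eq_fintype_card, Nat.card_eq_fintype_card, Fintype.card_subtype_compl,
        Fintype.card_subtype_eq]
    · intro χ ψ h
      have h' := congrArg (fun K => IntermediateField.fixingSubgroup K.1) h
      simp only [IntermediateField.fixingSubgroup_fixedField] at h'
      exact Subtype.ext (charKer_injective e h')
    · rintro ⟨K, hK⟩
      obtain ⟨χ, hχ, h⟩ := exists_charKer_eq e (H := K.fixingSubgroup)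
        (by rw [← IntermediateField.finrank_eq_fixingSubgroup_index, hK])
      exact ⟨⟨χ, hχ⟩, Subtype.ext (by simp only [h, IsGalois.fixedField_fixingSubgroup])⟩
  · intro x y hx hy hxy
    rw [← div_eq_one]
    have hodd : Odd (orderOf (x / y)) := by
      rw [div_eq_mul_inv]
      exact odd_orderOf_mul hx (by rwa [orderOf_inv])
    have hone (K : IntermediateField ℚ k) (hK : Module.finrank ℚ K = 2) : ν K (x / y) = 1 := by
      rw [map_div, hxy K hK, div_self']
    refine eq_one_of_odd_of_pow hodd (r - 1) ?_
    generalize x / y = c at hone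
    obtain ⟨I, rfl⟩ := ClassGroup.mk0_surjective c
    have h := prod_prod_charKer e hr (smulClass I)
    rw [prod_smulClass_eq_one, one_pow, one_mul, smulClass_one] at h
    rw [← h]
    refine Finset.prod_eq_one fun χ _ => ?_
    by_cases hχ : χ = 0
    -- The zero character contributes the product of all conjugates of `I`.
    · subst hχ
      rw [← prod_smulClass_eq_one I]
      exact Fintype.prod_equiv (Equiv.subtypeUnivEquiv fun g => by simp [mem_charKer]) _ _
        fun _ => rfl
    · set K := IntermediateField.fixedField (charKer e χ) with hKdef
      have hfix : K.fixingSubgroup = charKer e χ := IntermediateField.fixingSubgroup_fixedField _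
      have hK : Module.finrank ℚ K = 2 := by
        rw [IntermediateField.finrank_eq_fixingSubgroup_index, hfix, index_charKer e hχ]
      obtain ⟨N, hN, hNν⟩ := hrel K hK I
      have h2 := extendedHom_mk0_relNorm K I N hN
      rw [← hNν, hone K hK, map_one] at h2
      rw [h2]
      exact Fintype.prod_equiv (Equiv.subtypeEquivRight fun g => by
        change g ∈ charKer e χ ↔ g ∈ K.fixingSubgroup
        rw [hfix]) _ _ fun _ => rfl
  · intro w hw
    have hroot (K : {K : IntermediateField ℚ k // Module.finrank ℚ K = 2}) :
        ∃ y : ClassGroup (𝓞 K.1), Odd (orderOf y) ∧ y ^ 2 ^ (r - 1) = w K.1 := by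
      obtain ⟨m, hm⟩ := exists_pow_eq_self_of_coprime
        ((hw K.1 K.2).coprime_two_left.pow_left (r - 1))
      exact ⟨w K.1 ^ m, (hw K.1 K.2).of_dvd_nat (orderOf_pow_dvd m), by
        rw [← pow_mul, mul_comm, pow_mul, hm]⟩
    choose y hyodd hy using hroot
    have : Finite (IntermediateField ℚ k) :=
      Finite.of_injective IntermediateField.fixingSubgroup
        (IsGalois.intermediateFieldEquivSubgroup (F := ℚ) (E := k)).injective
    have : Fintype {K : IntermediateField ℚ k // Module.finrank ℚ K = 2} := Fintype.ofFinite _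
    refine ⟨∏ K, ClassGroup.extendedHom (𝓞 K.1) (𝓞 k) (y K), ?_, fun L hL => ?_⟩
    · exact Finset.prod_induction _ (fun c => Odd (orderOf c)) (fun _ _ => odd_orderOf_mul)
        (by simp) fun K _ => odd_orderOf_map _ (hyodd K)
    · rw [map_prod, Finset.prod_eq_single ⟨L, hL⟩]
      · rw [hself L hL, hy]
      · intro K _ hKL
        exact hother K.1 L K.2 hL (fun h => hKL (Subtype.ext h)) _ (hyodd K)
      · simp
end
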